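/- arXiv:2209.10881 — 2 statements merged into one kernel-verified Lean document; each statement's English description precedes it below -/
import Mathlib

section
/- Let X be a real m×n matrix, W a real m×r matrix and H a real r×n matrix with X = W·H, and let λ > 0 be a real scalar. If H has rank r (full row rank), then Xᵀ·X = λ·Hᵀ·H if and only if Wᵀ·W = λ·I_r, where I_r is the r×r identity matrix. (Theorem 2 of the paper.) -/
open Matrix

/-- Theorem 2 of the paper: for `X = W * H` with `H` of full row rank `r` and `λ > 0`,
`Xᵀ * X = λ • (Hᵀ * H)` iff `Wᵀ * W = λ • I_r`. -/
theorem dspnmf_theorem2 {m n r : ℕ}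
    (X : Matrix (Fin m) (Fin n) ℝ) (W : Matrix (Fin m) (Fin r) ℝ)
    (H : Matrix (Fin r) (Fin n) ℝ) (lam : ℝ) (hlam : 0 < lam)
    (hX : X = W * H) (hrank : H.rank = r) :
    Xᵀ * X = lam • (Hᵀ * H) ↔ Wᵀ * W = lam • (1 : Matrix (Fin r) (Fin r) ℝ) := by
  obtain ⟨B, hB⟩ : ∃ B : Matrix (Fin n) (Fin r) ℝ, H * B = 1 := by
    rw [← Matrix.mulVec_surjective_iff_exists_right_inverse]
    have h : LinearMap.range H.mulVecLin = ⊤ := by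
      apply Submodule.eq_top_of_finrank_eq
      rw [Module.finrank_fin_fun]
      exact hrank
    exact LinearMap.range_eq_top.mp h
  have hB' : Bᵀ * Hᵀ = 1 := by rw [← Matrix.transpose_mul, hB, Matrix.transpose_one]
  have e1 : Xᵀ * X = Hᵀ * (Wᵀ * W) * H := by
    rw [hX, Matrix.transpose_mul]
    simp only [Matrix.mul_assoc]
  rw [e1]
  constructor
  · intro h
    calc Wᵀ * W = (Bᵀ * Hᵀ) * (Wᵀ * W) * (H * B) := by rw [hB, hB', Matrix.one_mul, Matrix.mul_one]
      _ = Bᵀ * (Hᵀ * (Wᵀ * W) * H) * B := by simp only [Matrix.mul_assoc]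
      _ = lam • ((Bᵀ * Hᵀ) * (H * B)) := by
        rw [h]
        simp only [Matrix.mul_assoc, Matrix.mul_smul, Matrix.smul_mul]
      _ = lam • 1 := by rw [hB, hB', Matrix.one_mul]
  · intro h
    rw [h, Matrix.mul_smul, Matrix.smul_mul, Matrix.mul_one]
end

section
/- Let X ∈ ℝ^{m×n}, W ∈ ℝ^{m×r}, H ∈ ℝ^{r×n} be matrices with strictly positive entries. Define W′ entrywise by W′_{ab} = W_{ab} · (X·Hᵀ)_{ab} / (W·H·Hᵀ)_{ab}. Then ‖X − W′·H‖²_F ≤ ‖X − W·H‖²_F, i.e. the Frobenius reconstruction error is non-increasing under the multiplicative update of the basis matrix W. -/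
open Matrix

/-- Squared Frobenius norm of a real matrix. -/
noncomputable def frobSq {m n : ℕ} (A : Matrix (Fin m) (Fin n) ℝ) : ℝ :=
  ∑ i, ∑ j, (A i j) ^ 2

theorem row_aux {n r : ℕ} (x : Fin n → ℝ) (w w' : Fin r → ℝ) (H : Fin r → Fin n → ℝ)
    (hw : ∀ b, 0 < w b) (hH : ∀ b j, 0 < H b j)
    (h : ∀ b, (w' b - w b) * (∑ j, (∑ c, w c * H c j) * H b j)
      = w b * (∑ j, x j * H b j - ∑ j, (∑ c, w c * H c j) * H b j)) :
    ∑ j, (x j - ∑ b, w' b * H b j) ^ 2 ≤ ∑ j, (x j - ∑ b, w b * H b j) ^ 2 := by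
  set y : Fin n → ℝ := fun j => ∑ c, w c * H c j with hy
  have hy0 : ∀ j, 0 ≤ y j := fun j =>
    Finset.sum_nonneg fun b _ => (mul_pos (hw b) (hH b j)).le
  set e : Fin n → ℝ := fun j => ∑ b, (w' b - w b) * H b j with he
  have h1 : ∀ j, ∑ b, w' b * H b j = y j + e j := by
    intro j
    simp only [hy, he, ← Finset.sum_add_distrib]
    exact Finset.sum_congr rfl fun b _ => by ring
  have cs : ∀ j, e j ^ 2 ≤ (∑ b, (w' b - w b) ^ 2 / w b * H b j) * y j := by
    intro j
    apply Finset.sum_sq_le_sum_mul_sum_of_sq_eq_mul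
    · intro b _
      have := hw b
      have := hH b j
      positivity
    · intro b _
      exact (mul_pos (hw b) (hH b j)).le
    · intro b _
      have := (hw b).ne'
      field_simp
  have s1 : ∑ j, (∑ b, (w' b - w b) ^ 2 / w b * H b j) * y j
      = ∑ b, (w' b - w b) ^ 2 / w b * ∑ j, y j * H b j := by
    simp only [Finset.sum_mul, Finset.mul_sum]
    rw [Finset.sum_comm]
    exact Finset.sum_congr rfl fun b _ => Finset.sum_congr rfl fun j _ => by ring
  have s2 : ∑ j, (x j - y j) * e j
      = ∑ b, (w' b - w b) ^ 2 / w b * ∑ j, y j * H b j := by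
    have : ∀ b, (w' b - w b) ^ 2 / w b * ∑ j, y j * H b j
        = (w' b - w b) * (∑ j, x j * H b j - ∑ j, y j * H b j) := by
      intro b
      have hb := (hw b).ne'
      have h2 := h b
      change (w' b - w b) * (∑ j, y j * H b j)
        = w b * (∑ j, x j * H b j - ∑ j, y j * H b j) at h2
      rw [div_mul_eq_mul_div, div_eq_iff hb, pow_two, mul_assoc, h2]
      ring
    simp only [this, he, ← Finset.sum_sub_distrib, Finset.mul_sum]
    rw [Finset.sum_comm]
    exact Finset.sum_congr rfl fun b _ => Finset.sum_congr rfl fun j _ => by ring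
  have s3 : 0 ≤ ∑ b, (w' b - w b) ^ 2 / w b * ∑ j, y j * H b j := by
    apply Finset.sum_nonneg
    intro b _
    apply mul_nonneg
    · have := hw b
      positivity
    · exact Finset.sum_nonneg fun j _ => mul_nonneg (hy0 j) (hH b j).le
  have s4 : ∑ j, e j ^ 2 ≤ _ := Finset.sum_le_sum fun j _ => cs j
  have s5 : ∑ j, (x j - (y j + e j)) ^ 2
      = ∑ j, (x j - y j) ^ 2 + ∑ j, e j ^ 2 - 2 * ∑ j, (x j - y j) * e j := by
    rw [Finset.mul_sum, ← Finset.sum_add_distrib, ← Finset.sum_sub_distrib]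
    exact Finset.sum_congr rfl fun j _ => by ring
  simp only [h1]
  rw [s5]
  linarith

/-- The Frobenius reconstruction error is non-increasing under the
multiplicative update of the basis matrix `W`. -/
theorem dspnmf_W_update_nonincreasing {m n r : ℕ}
    (X : Matrix (Fin m) (Fin n) ℝ) (W : Matrix (Fin m) (Fin r) ℝ)
    (H : Matrix (Fin r) (Fin n) ℝ)
    (hX : ∀ i j, 0 < X i j) (hW : ∀ i j, 0 < W i j) (hH : ∀ i j, 0 < H i j)
    (W' : Matrix (Fin m) (Fin r) ℝ)
    (hW' : ∀ a b, W' a b = W a b * (X * Hᵀ) a b / (W * H * Hᵀ) a b) :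
    frobSq (X - W' * H) ≤ frobSq (X - W * H) := by
  rcases Nat.eq_zero_or_pos n with rfl | hn
  · simp [frobSq]
  unfold frobSq
  apply Finset.sum_le_sum
  intro i _
  simp only [Matrix.sub_apply, Matrix.mul_apply]
  apply row_aux (X i) (W i) (W' i) H (hW i) hH
  intro b
  have hD : 0 < ∑ j, (∑ c, W i c * H c j) * H b j := by
    have : Nonempty (Fin n) := ⟨⟨0, hn⟩⟩
    have : Nonempty (Fin r) := ⟨b⟩
    exact Finset.sum_pos (fun j _ => mul_pos (Finset.sum_pos
      (fun c _ => mul_pos (hW i c) (hH c j)) Finset.univ_nonempty) (hH b j))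
      Finset.univ_nonempty
  have h := hW' i b
  simp only [Matrix.mul_apply, Matrix.transpose_apply] at h
  rw [h, sub_mul, div_mul_cancel₀ _ hD.ne']
  ring
end
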